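/- Let K be a field of characteristic ≠ 2 and let f(x) = a x^2 + b x + c ∈ K[x] with a ≠ 0 and D = b^2 - 4ac ≠ 0. If g, h ∈ K[x] with deg g ≥ 2, g' ≠ 0, and f(g(x)) = f(x) h(x)^2, then over the extension K(√D) there exists n ≥ 1 and signs ε, δ ∈ {±1} such that g(x) = (ε T_n((2ax+b)/√D) √D - b)/(2a) and h(x) = δ U_{n-1}((2ax+b)/√D). -/

import Mathlib

open Polynomial

/-!
Completing the square turns `f(g) = f h²` into the Pell equation `W² - (Y² - 1) h² = 1` for
`Y = (2 a x + b) / √D` and `W = (2 a g + b) / √D`, where `D = b² - 4 a c`. Its solutions are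
generated, up to signs, by the fundamental solution `(Y, 1)`, whose `n`-th power is
`(T_n(Y), U_{n-1}(Y))`: choose the sign of `Q` in a solution `(P, Q)` with `Q ≠ 0` so that the
leading coefficients of `P` and `Y Q` agree; then dividing by `(Y, 1)` strictly lowers the degree
of `Q`, so the process ends at `(±1, 0)`.
-/

section Pell

variable {R : Type*} [CommRing R] {Y P Q : R[X]}

/-- `(P, Q)` solves the polynomial Pell equation with parameter `Y ^ 2 - 1`. This choice of
parameter makes `(Y, 1)` a solution. -/
def IsPellSolution (Y P Q : R[X]) : Prop :=
  P ^ 2 - (Y ^ 2 - 1) * Q ^ 2 = 1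

/-- `(P, Q)` is, up to a common sign, an integral power of the solution `(Y, 1)` of the Pell
equation, written in terms of Chebyshev polynomials. -/
def IsChebyshevPair (Y P Q : R[X]) : Prop :=
  ∃ (n : ℤ) (ε : R), (ε = 1 ∨ ε = -1) ∧
    P = C ε * (Chebyshev.T R n).comp Y ∧ Q = C ε * (Chebyshev.U R (n - 1)).comp Y

namespace IsChebyshevPair

lemma one_zero (Y : R[X]) : IsChebyshevPair Y 1 0 :=
  ⟨0, 1, Or.inl rfl, by simp, by simp⟩

lemma neg_one_zero (Y : R[X]) : IsChebyshevPair Y (-1) 0 :=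
  ⟨0, -1, Or.inr rfl, by simp, by simp⟩

lemma neg_right (h : IsChebyshevPair Y P Q) : IsChebyshevPair Y P (-Q) := by
  obtain ⟨n, ε, hε, hP, hQ⟩ := h
  refine ⟨-n, ε, hε, by rwa [Chebyshev.T_neg], ?_⟩
  rw [Chebyshev.U_neg_sub_one, neg_comp, mul_neg, hQ]

lemma of_descent (h : IsChebyshevPair Y (Y * P - (Y ^ 2 - 1) * Q) (Y * Q - P)) :
    IsChebyshevPair Y P Q := by
  obtain ⟨n, ε, hε, hP, hQ⟩ := h
  have hT := congrArg (comp · Y) (Chebyshev.T_eq_X_mul_T_sub_pol_U R (n - 1))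
  have hU := congrArg (comp · Y) (Chebyshev.U_eq_X_mul_U_add_T R (n - 1))
  simp only [sub_add_cancel, show n - 1 + 2 = n + 1 by ring, sub_comp, add_comp, mul_comp,
    pow_comp, X_comp, one_comp] at hT hU
  refine ⟨n + 1, ε, hε, ?_, ?_⟩
  · linear_combination Y * hP + (Y ^ 2 - 1) * hQ - C ε * hT
  · rw [add_sub_cancel_right]
    linear_combination hP + Y * hQ - C ε * hU

lemma exists_nat (h : IsChebyshevPair Y P Q) :
    ∃ (n : ℕ) (ε δ : R), (ε = 1 ∨ ε = -1) ∧ (δ = 1 ∨ δ = -1) ∧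
      P = C ε * (Chebyshev.T R n).comp Y ∧ Q = C δ * (Chebyshev.U R ((n : ℤ) - 1)).comp Y := by
  obtain ⟨m, ε, hε, hP, hQ⟩ := h
  obtain ⟨n, rfl | rfl⟩ := m.eq_nat_or_neg
  · exact ⟨n, ε, ε, hε, hε, hP, hQ⟩
  · refine ⟨n, ε, -ε, hε, ?_, by rwa [Chebyshev.T_neg] at hP, ?_⟩
    · rwa [neg_inj, neg_eq_iff_eq_neg, or_comm]
    · rw [hQ, Chebyshev.U_neg_sub_one, neg_comp, C_neg, mul_neg, neg_mul]

end IsChebyshevPair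

namespace IsPellSolution

lemma neg_right (h : IsPellSolution Y P Q) : IsPellSolution Y P (-Q) := by
  rwa [IsPellSolution, neg_sq]

-- Division by the fundamental solution `(Y, 1)`, whose inverse is its conjugate `(Y, -1)`.
lemma descent (h : IsPellSolution Y P Q) :
    IsPellSolution Y (Y * P - (Y ^ 2 - 1) * Q) (Y * Q - P) := by
  rw [IsPellSolution] at h ⊢
  linear_combination h

lemma sq_sub_one_eq (h : IsPellSolution Y P Q) : P ^ 2 - 1 = (Y ^ 2 - 1) * Q ^ 2 := by
  rw [IsPellSolution] at h
  linear_combination h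

end IsPellSolution

section IsDomain

variable [IsDomain R]

lemma natDegree_sq_sub_one (p : R[X]) : (p ^ 2 - 1).natDegree = 2 * p.natDegree := by
  rw [← C_1, natDegree_sub_C, natDegree_pow]

lemma leadingCoeff_sq_sub_one {p : R[X]} (hp : p.natDegree ≠ 0) :
    (p ^ 2 - 1).leadingCoeff = p.leadingCoeff ^ 2 := by
  rw [leadingCoeff, natDegree_sq_sub_one, coeff_sub, coeff_one, if_neg (by lia), sub_zero,
    ← natDegree_pow, coeff_natDegree, leadingCoeff_pow]

namespace IsPellSolution

lemma natDegree_eq_add (h : IsPellSolution Y P Q) (hY : Y.natDegree ≠ 0) (hQ : Q ≠ 0) :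
    P.natDegree = Y.natDegree + Q.natDegree := by
  have hY1 : Y ^ 2 - 1 ≠ 0 := by
    refine ne_zero_of_natDegree_gt (n := 0) ?_
    rw [natDegree_sq_sub_one]
    lia
  have hdeg := congrArg natDegree h.sq_sub_one_eq
  rw [natDegree_mul hY1 (pow_ne_zero 2 hQ), natDegree_sq_sub_one, natDegree_sq_sub_one,
    natDegree_pow] at hdeg
  lia

lemma leadingCoeff_eq_mul_or_mul_neg (h : IsPellSolution Y P Q) (hY : Y.natDegree ≠ 0)
    (hQ : Q ≠ 0) :
    P.leadingCoeff = (Y * Q).leadingCoeff ∨ P.leadingCoeff = (Y * -Q).leadingCoeff := by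
  have hP : P.natDegree ≠ 0 := by
    rw [h.natDegree_eq_add hY hQ]
    lia
  have hlead := congrArg leadingCoeff h.sq_sub_one_eq
  rw [leadingCoeff_mul, leadingCoeff_sq_sub_one hP, leadingCoeff_sq_sub_one hY,
    leadingCoeff_pow, ← mul_pow, ← leadingCoeff_mul] at hlead
  rwa [mul_neg, leadingCoeff_neg, ← sq_eq_sq_iff_eq_or_eq_neg]

variable [NeZero (2 : R)]

-- `(Y Q - P) (Y Q + P) = Q ^ 2 - 1`, and there is no cancellation in the second factor.
lemma degree_mul_sub_lt (h : IsPellSolution Y P Q) (hY : Y.natDegree ≠ 0) (hQ : Q ≠ 0)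
    (hlead : P.leadingCoeff = (Y * Q).leadingCoeff) : (Y * Q - P).degree < Q.degree := by
  have hY0 : Y ≠ 0 := ne_zero_of_natDegree_gt (Nat.pos_of_ne_zero hY)
  have hYQ : (Y * Q).natDegree = Y.natDegree + Q.natDegree := natDegree_mul hY0 hQ
  have hsum_coeff : (Y * Q + P).coeff (Y.natDegree + Q.natDegree) ≠ 0 := by
    rw [coeff_add, ← hYQ, coeff_natDegree, hYQ, ← h.natDegree_eq_add hY hQ, coeff_natDegree,
      hlead, ← two_mul]
    exact mul_ne_zero two_ne_zero (leadingCoeff_ne_zero.mpr (mul_ne_zero hY0 hQ))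
  have hsum_ne : Y * Q + P ≠ 0 := fun h0 ↦ hsum_coeff (by rw [h0, coeff_zero])
  have hsum_deg := le_natDegree_of_ne_zero hsum_coeff
  have hprod : (Y * Q - P) * (Y * Q + P) = Q ^ 2 - 1 := by
    linear_combination -h.sq_sub_one_eq
  rcases eq_or_ne (Y * Q - P) 0 with hdiff | hdiff
  · rw [hdiff, degree_zero]
    exact bot_lt_iff_ne_bot.mpr (degree_ne_bot.mpr hQ)
  · have hdeg := congrArg natDegree hprod
    rw [natDegree_mul hdiff hsum_ne, natDegree_sq_sub_one] at hdeg
    exact degree_lt_degree (by lia)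

theorem isChebyshevPair (h : IsPellSolution Y P Q) (hY : Y.natDegree ≠ 0) :
    IsChebyshevPair Y P Q := by
  induction hd : Q.degree using WellFoundedLT.induction generalizing P Q with
  | ind d ih =>
    subst hd
    rcases eq_or_ne Q 0 with rfl | hQ
    · have hP : P ^ 2 = 1 := by simpa [IsPellSolution] using h
      rcases sq_eq_one_iff.mp hP with rfl | rfl
      · exact IsChebyshevPair.one_zero Y
      · exact IsChebyshevPair.neg_one_zero Y
    · rcases h.leadingCoeff_eq_mul_or_mul_neg hY hQ with hlead | hlead
      · have hlt := h.degree_mul_sub_lt hY hQ hlead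
        exact (ih _ hlt h.descent rfl).of_descent
      · have hlt := h.neg_right.degree_mul_sub_lt hY (neg_ne_zero.mpr hQ) hlead
        rw [degree_neg] at hlt
        simpa using (ih _ hlt h.neg_right.descent rfl).of_descent.neg_right

theorem exists_eq_chebyshev_comp (h : IsPellSolution Y P Q) (hY : Y.natDegree ≠ 0) :
    ∃ (n : ℕ) (ε δ : R), P.natDegree = n * Y.natDegree ∧ (ε = 1 ∨ ε = -1) ∧ (δ = 1 ∨ δ = -1) ∧
      P = C ε * (Chebyshev.T R n).comp Y ∧ Q = C δ * (Chebyshev.U R ((n : ℤ) - 1)).comp Y := by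
  obtain ⟨n, ε, δ, hε, hδ, hP, hQ⟩ := (h.isChebyshevPair hY).exists_nat
  have hε0 : ε ≠ 0 := by rcases hε with rfl | rfl <;> simp
  refine ⟨n, ε, δ, ?_, hε, hδ, hP, hQ⟩
  rw [hP, natDegree_C_mul hε0, natDegree_comp, Chebyshev.natDegree_T, Int.natAbs_natCast]

end IsPellSolution

end IsDomain

end Pell

section Quadratic

lemma four_mul_quadratic_comp {R : Type*} [CommRing R] (a b c : R) (p : R[X]) :
    C (4 * a) * (C a * X ^ 2 + C b * X + C c).comp p =
      (C (2 * a) * p + C b) ^ 2 - C (discrim a b c) := by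
  simp only [discrim, add_comp, mul_comp, pow_comp, C_comp, X_comp, C_mul, C_sub, C_pow, C_ofNat]
  ring

variable {L : Type*} [Field L] {a b c s : L} {g h : L[X]}

lemma isPellSolution_of_quadratic_comp_eq (hs0 : s ≠ 0) (hs : s ^ 2 = discrim a b c)
    (heq : (C a * X ^ 2 + C b * X + C c).comp g = (C a * X ^ 2 + C b * X + C c) * h ^ 2) :
    IsPellSolution (C s⁻¹ * (C (2 * a) * X + C b)) (C s⁻¹ * (C (2 * a) * g + C b)) h := by
  have hg := four_mul_quadratic_comp a b c g
  have hX := four_mul_quadratic_comp a b c X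
  rw [← hs, C_pow] at hg hX
  rw [comp_X] at hX
  have hinv : C s⁻¹ * C s = (1 : L[X]) := by rw [← C_mul, inv_mul_cancel₀ hs0, C_1]
  rw [IsPellSolution]
  linear_combination (C s⁻¹) ^ 2 * (C (4 * a) * heq - hg + h ^ 2 * hX) +
    (1 - h ^ 2) * (C s⁻¹ * C s + 1) * hinv

theorem exists_eq_chebyshev_of_quadratic_comp_eq [NeZero (2 : L)] (ha : a ≠ 0) (hs0 : s ≠ 0)
    (hs : s ^ 2 = discrim a b c)
    (heq : (C a * X ^ 2 + C b * X + C c).comp g = (C a * X ^ 2 + C b * X + C c) * h ^ 2) :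
    ∃ ε δ : L, (ε = 1 ∨ ε = -1) ∧ (δ = 1 ∨ δ = -1) ∧
      g = C (2 * a)⁻¹ * (C (ε * s) * (Chebyshev.T L g.natDegree).comp
          (C s⁻¹ * (C (2 * a) * X + C b)) - C b) ∧
      h = C δ * (Chebyshev.U L ((g.natDegree : ℤ) - 1)).comp
          (C s⁻¹ * (C (2 * a) * X + C b)) := by
  have h2a : 2 * a ≠ 0 := mul_ne_zero two_ne_zero ha
  have hdeg (p : L[X]) : (C s⁻¹ * (C (2 * a) * p + C b)).natDegree = p.natDegree := by
    rw [natDegree_C_mul (inv_ne_zero hs0), natDegree_add_C, natDegree_C_mul h2a]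
  have hY : (C s⁻¹ * (C (2 * a) * X + C b)).natDegree = 1 := (hdeg X).trans natDegree_X
  obtain ⟨n, ε, δ, hn, hε, hδ, hT, hU⟩ :=
    (isPellSolution_of_quadratic_comp_eq hs0 hs heq).exists_eq_chebyshev_comp (by lia)
  rw [hdeg, hY, mul_one] at hn
  subst hn
  refine ⟨ε, δ, hε, hδ, ?_, hU⟩
  have hs_inv : C s * C s⁻¹ = (1 : L[X]) := by rw [← C_mul, mul_inv_cancel₀ hs0, C_1]
  have h2a_inv : C (2 * a)⁻¹ * C (2 * a) = (1 : L[X]) := by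
    rw [← C_mul, inv_mul_cancel₀ h2a, C_1]
  rw [C_mul (a := ε)]
  linear_combination C (2 * a)⁻¹ * C s * hT - C (2 * a)⁻¹ * (C (2 * a) * g + C b) * hs_inv -
    g * h2a_inv

end Quadratic

theorem stmt_6_general {K : Type*} [CommRing K] (hchar : (2 : K) ≠ 0)
    (a b c : K) (ha : a ≠ 0) (hD : b ^ 2 - 4 * a * c ≠ 0) (g h : K[X])
    (heq : (C a * X ^ 2 + C b * X + C c).comp g = (C a * X ^ 2 + C b * X + C c) * h ^ 2)
    (L : Type*) [Field L] [Algebra K L] [FaithfulSMul K L] (s : L)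
    (hs : s ^ 2 = algebraMap K L (b ^ 2 - 4 * a * c)) :
    ∃ ε δ : L, (ε = 1 ∨ ε = -1) ∧ (δ = 1 ∨ δ = -1) ∧
      g.map (algebraMap K L) =
        C (algebraMap K L (2 * a))⁻¹ *
          (C (ε * s) * (Chebyshev.T L g.natDegree).comp
              (C s⁻¹ * (C (algebraMap K L (2 * a)) * X + C (algebraMap K L b)))
            - C (algebraMap K L b)) ∧
      h.map (algebraMap K L) =
        C δ * (Chebyshev.U L ((g.natDegree : ℤ) - 1)).comp
          (C s⁻¹ * (C (algebraMap K L (2 * a)) * X + C (algebraMap K L b))) := by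
  have hinj : Function.Injective (algebraMap K L) := FaithfulSMul.algebraMap_injective K L
  have map_ne {x : K} (hx : x ≠ 0) : algebraMap K L x ≠ 0 :=
    (map_ne_zero_iff _ hinj).mpr hx
  have : NeZero (2 : L) := ⟨map_ofNat (algebraMap K L) 2 ▸ map_ne hchar⟩
  have hs0 : s ≠ 0 := by
    rintro rfl
    exact map_ne hD (by rw [← hs, zero_pow two_ne_zero])
  have heqL := congrArg (Polynomial.map (algebraMap K L)) heq
  simp only [Polynomial.map_comp, Polynomial.map_mul, Polynomial.map_add, Polynomial.map_pow,
    map_C, map_X] at heqL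
  have hsL : s ^ 2 = discrim (algebraMap K L a) (algebraMap K L b) (algebraMap K L c) := by
    rw [hs, discrim, map_sub, map_mul, map_mul, map_pow, map_ofNat (algebraMap K L) 4]
  rw [map_mul, map_ofNat, ← natDegree_map_eq_of_injective hinj g]
  exact exists_eq_chebyshev_of_quadratic_comp_eq (map_ne ha) hs0 hsL heqL

theorem stmt_6 {K : Type*} [Field K] (hchar : (2 : K) ≠ 0)
    (a b c : K) (ha : a ≠ 0) (hD : b ^ 2 - 4 * a * c ≠ 0)
    (g h : K[X]) (hg : 2 ≤ g.natDegree) (hg' : derivative g ≠ 0)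
    (heq : (C a * X ^ 2 + C b * X + C c).comp g = (C a * X ^ 2 + C b * X + C c) * h ^ 2)
    (L : Type*) [Field L] [Algebra K L] (s : L)
    (hs : s ^ 2 = algebraMap K L (b ^ 2 - 4 * a * c)) :
    ∃ (n : ℕ) (ε δ : L), 1 ≤ n ∧ (ε = 1 ∨ ε = -1) ∧ (δ = 1 ∨ δ = -1) ∧
      g.map (algebraMap K L) =
        C (algebraMap K L (2 * a))⁻¹ *
          (C (ε * s) * (Chebyshev.T L n).comp
              (C s⁻¹ * (C (algebraMap K L (2 * a)) * X + C (algebraMap K L b)))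
            - C (algebraMap K L b)) ∧
      h.map (algebraMap K L) =
        C δ * (Chebyshev.U L ((n : ℤ) - 1)).comp
          (C s⁻¹ * (C (algebraMap K L (2 * a)) * X + C (algebraMap K L b))) := by
  obtain ⟨ε, δ, result⟩ := stmt_6_general hchar a b c ha hD g h heq L s hs
  exact ⟨g.natDegree, ε, δ, by lia, result⟩
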